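/- arXiv:2505.09270 — 3 statements merged into one kernel-verified Lean document; each statement's English description precedes it below -/
import Mathlib

section
/- Let n ≥ 1, let V : ℝⁿ → ℝ be continuously differentiable, and let f : ℝⁿ → ℂ be continuously differentiable. Set u(x,v) = f(x)·exp(−|v|²/4). If for all (x,v) ∈ ℝⁿ × ℝⁿ one has v·∇_x u(x,v) − ∇V(x)·∇_v u(x,v) = 0, then there exists a constant c ∈ ℂ such that f(x) = c·exp(−V(x)/2) for all x ∈ ℝⁿ. -/
/-!
Differentiating the Gaussian factor gives `∇_v u = -(v / 2) u`, so the transport term of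
`u(x, v) = f(x) exp(-|v|² / 4)` is `exp(-|v|² / 4) (∇f(x) + f(x) ∇V(x) / 2) · v`. It vanishes for
every `v` exactly when `∇f = f ∇(-V / 2)`, that is, when `f exp(V / 2)` has zero gradient.
-/

section LogarithmicDerivative

variable {𝕜 E : Type*} [RCLike 𝕜] [NormedAlgebra 𝕜 ℂ] [NormedAddCommGroup E] [NormedSpace 𝕜 E]
  {f φ : E → ℂ}

theorem hasFDerivAt_mul_cexp_neg {x : E} (hf : DifferentiableAt 𝕜 f x)
    (hφ : DifferentiableAt 𝕜 φ x) :
    HasFDerivAt (fun y => f y * Complex.exp (-φ y))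
      (Complex.exp (-φ x) • (fderiv 𝕜 f x - f x • fderiv 𝕜 φ x)) x := by
  refine (hf.hasFDerivAt.mul hφ.hasFDerivAt.neg.cexp).congr_fderiv ?_
  module

theorem fderiv_eq_smul_fderiv_iff_exists_eq_mul_cexp (hf : Differentiable 𝕜 f)
    (hφ : Differentiable 𝕜 φ) :
    (∀ x, fderiv 𝕜 f x = f x • fderiv 𝕜 φ x) ↔ ∃ c, ∀ x, f x = c * Complex.exp (φ x) := by
  constructor
  · intro h
    have hquot (x : E) : HasFDerivAt (fun y => f y * Complex.exp (-φ y)) (0 : E →L[𝕜] ℂ) x := by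
      simpa only [h x, sub_self, smul_zero] using hasFDerivAt_mul_cexp_neg (hf x) (hφ x)
    have hconst (x : E) : f x * Complex.exp (-φ x) = f 0 * Complex.exp (-φ 0) :=
      is_const_of_fderiv_eq_zero (fun y => (hquot y).differentiableAt)
        (fun y => (hquot y).fderiv) x 0
    refine ⟨f 0 * Complex.exp (-φ 0), fun x => ?_⟩
    rw [← hconst x, mul_assoc, ← Complex.exp_add, neg_add_cancel, Complex.exp_zero, mul_one]
  · rintro ⟨c, hc⟩ x
    obtain rfl : f = fun y => c * Complex.exp (φ y) := funext hc
    rw [((hφ x).hasFDerivAt.cexp.const_mul c).fderiv, smul_smul]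

end LogarithmicDerivative

theorem hasFDerivAt_neg_ofReal_div_const {E : Type*} [NormedAddCommGroup E] [NormedSpace ℝ E]
    {g : E → ℝ} {g' : E →L[ℝ] ℝ} {x : E} (hg : HasFDerivAt g g' x) (k : ℂ) :
    HasFDerivAt (fun y => -(g y : ℂ) / k) (-k⁻¹ • Complex.ofRealCLM.comp g') x := by
  simp only [div_eq_mul_inv]
  refine ((Complex.ofRealCLM.hasFDerivAt.comp x hg).neg.mul_const k⁻¹).congr_fderiv ?_
  module

section KramersFokkerPlanck

variable {ι : Type*} [Fintype ι]

theorem map_pi_eq_sum_single [DecidableEq ι] {R M L : Type*} [Semiring R] [AddCommMonoid M]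
    [Module R M] [FunLike L (ι → R) M] [LinearMapClass L R (ι → R) M] (l : L) (v : ι → R) :
    l v = ∑ j, v j • l (Pi.single j 1) := by
  conv_lhs => rw [pi_eq_sum_univ' v, map_sum]
  simp only [map_smul]

/-- The weight `exp(-|v|² / 4)`, with `|v|` the Euclidean norm: up to normalization, the square root
of the Maxwellian velocity distribution. It is complex-valued since it multiplies complex
amplitudes. -/
noncomputable def sqrtMaxwellian (v : ι → ℝ) : ℂ :=
  Complex.exp (-((∑ j, (v j) ^ 2 : ℝ) : ℂ) / 4)

theorem sqrtMaxwellian_ne_zero (v : ι → ℝ) : sqrtMaxwellian v ≠ 0 :=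
  Complex.exp_ne_zero _

theorem hasFDerivAt_sum_sq (v : ι → ℝ) :
    HasFDerivAt (fun w : ι → ℝ => ∑ j, (w j) ^ 2)
      (∑ j, (2 * v j) • ContinuousLinearMap.proj (R := ℝ) (φ := fun _ : ι => ℝ) j) v := by
  refine HasFDerivAt.fun_sum fun j _ => ?_
  simpa using (hasFDerivAt_apply (𝕜 := ℝ) j v).pow 2

theorem hasFDerivAt_sqrtMaxwellian (v : ι → ℝ) :
    HasFDerivAt sqrtMaxwellian
      ((-sqrtMaxwellian v / 2) • Complex.ofRealCLM.comp
        (∑ j, v j • ContinuousLinearMap.proj (R := ℝ) (φ := fun _ : ι => ℝ) j)) v := by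
  refine (hasFDerivAt_neg_ofReal_div_const (hasFDerivAt_sum_sq v) 4).cexp.congr_fderiv ?_
  rw [← sqrtMaxwellian]
  simp only [mul_smul, ← Finset.smul_sum, ContinuousLinearMap.comp_smul]
  module

variable [DecidableEq ι]

theorem fderiv_sqrtMaxwellian_single (v : ι → ℝ) (j : ι) :
    fderiv ℝ sqrtMaxwellian v (Pi.single j 1) = -(v j : ℂ) / 2 * sqrtMaxwellian v := by
  rw [(hasFDerivAt_sqrtMaxwellian v).fderiv]
  simp only [smul_apply, ContinuousLinearMap.comp_apply, sum_apply, ContinuousLinearMap.proj_apply,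
    Pi.single_apply, smul_eq_mul, mul_ite, mul_one, mul_zero, Finset.sum_ite_eq', Finset.mem_univ,
    if_true, Complex.ofRealCLM_apply]
  ring

/-- The transport part `v · ∇_x u - ∇V(x) · ∇_v u` of the Kramers–Fokker–Planck operator with
potential `V`, in coordinates. -/
noncomputable def kramersTransport (V : (ι → ℝ) → ℝ) (u : (ι → ℝ) → (ι → ℝ) → ℂ)
    (x v : ι → ℝ) : ℂ :=
  (∑ j, ((v j : ℝ) : ℂ) * fderiv ℝ (fun y => u y v) x (Pi.single j 1))
    - ∑ j, ((fderiv ℝ V x (Pi.single j 1) : ℝ) : ℂ) * fderiv ℝ (u x) v (Pi.single j 1)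

variable {V : (ι → ℝ) → ℝ} {f : (ι → ℝ) → ℂ}

theorem kramersTransport_mul_sqrtMaxwellian (V : (ι → ℝ) → ℝ) {x : ι → ℝ}
    (hf : DifferentiableAt ℝ f x) (v : ι → ℝ) :
    kramersTransport V (fun y w => f y * sqrtMaxwellian w) x v =
      sqrtMaxwellian v * (fderiv ℝ f x v + f x * (fderiv ℝ V x v : ℝ) / 2) := by
  have hposition : fderiv ℝ (fun y => f y * sqrtMaxwellian v) x = sqrtMaxwellian v • fderiv ℝ f x :=
    fderiv_mul_const hf _
  have hvelocity : fderiv ℝ (fun w => f x * sqrtMaxwellian w) v = f x • fderiv ℝ sqrtMaxwellian v :=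
    fderiv_const_mul (hasFDerivAt_sqrtMaxwellian v).differentiableAt _
  rw [kramersTransport, hposition, hvelocity, map_pi_eq_sum_single (fderiv ℝ f x),
    map_pi_eq_sum_single (fderiv ℝ V x)]
  simp only [smul_apply, fderiv_sqrtMaxwellian_single, smul_eq_mul,
    Complex.real_smul, Complex.ofReal_sum, Complex.ofReal_mul, mul_add, Finset.mul_sum,
    Finset.sum_div, ← Finset.sum_sub_distrib, ← Finset.sum_add_distrib]
  exact Finset.sum_congr rfl fun j _ => by ring

theorem kramersTransport_mul_sqrtMaxwellian_eq_zero_iff {x : ι → ℝ} (hV : DifferentiableAt ℝ V x)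
    (hf : DifferentiableAt ℝ f x) :
    (∀ v, kramersTransport V (fun y w => f y * sqrtMaxwellian w) x v = 0) ↔
      fderiv ℝ f x = f x • fderiv ℝ (fun y => -(V y : ℂ) / 2) x := by
  have hpotential (v : ι → ℝ) : (f x • fderiv ℝ (fun y => -(V y : ℂ) / 2) x) v =
      -(f x * (fderiv ℝ V x v : ℝ) / 2) := by
    rw [(hasFDerivAt_neg_ofReal_div_const hV.hasFDerivAt 2).fderiv]
    simp only [smul_apply, ContinuousLinearMap.comp_apply, Complex.ofRealCLM_apply, smul_eq_mul]
    ring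
  rw [ContinuousLinearMap.ext_iff]
  refine forall_congr' fun v => ?_
  rw [kramersTransport_mul_sqrtMaxwellian V hf, mul_eq_zero_iff_left (sqrtMaxwellian_ne_zero v),
    hpotential, eq_neg_iff_add_eq_zero]

theorem stmt_5_general (hV : Differentiable ℝ V) (hf : Differentiable ℝ f) :
    (∀ x v, kramersTransport V (fun y w => f y * sqrtMaxwellian w) x v = 0) ↔
      ∃ c : ℂ, ∀ x, f x = c * Complex.exp (-(V x : ℂ) / 2) := by
  have hφ : Differentiable ℝ fun x => -(V x : ℂ) / 2 := by fun_prop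
  rw [← fderiv_eq_smul_fderiv_iff_exists_eq_mul_cexp hf hφ]
  exact forall_congr' fun x => kramersTransport_mul_sqrtMaxwellian_eq_zero_iff (hV x) (hf x)

end KramersFokkerPlanck

/-- If `u(x,v) = f(x)·exp(−|v|²/4)` is annihilated by the transport part
`v·∇_x − ∇V(x)·∇_v` of the Kramers–Fokker–Planck operator, then
`f(x) = c·exp(−V(x)/2)` for some constant `c ∈ ℂ`. -/
theorem stmt_5 (n : ℕ) (hn : 1 ≤ n) (V : (Fin n → ℝ) → ℝ) (hV : ContDiff ℝ 1 V)
    (f : (Fin n → ℝ) → ℂ) (hf : ContDiff ℝ 1 f)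
    (u : (Fin n → ℝ) → (Fin n → ℝ) → ℂ)
    (hu : ∀ x v : Fin n → ℝ, u x v = f x * Complex.exp (-((∑ j, (v j) ^ 2 : ℝ) : ℂ) / 4))
    (heq : ∀ x v : Fin n → ℝ,
      (∑ j, ((v j : ℝ) : ℂ) * fderiv ℝ (fun y => u y v) x (Pi.single j 1))
        - (∑ j, ((fderiv ℝ V x (Pi.single j 1) : ℝ) : ℂ) *
            fderiv ℝ (u x) v (Pi.single j 1)) = 0) :
    ∃ c : ℂ, ∀ x : Fin n → ℝ, f x = c * Complex.exp (-(V x : ℂ) / 2) := by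
  obtain rfl : u = fun x v => f x * sqrtMaxwellian v := funext₂ hu
  exact (stmt_5_general (hV.differentiable one_ne_zero) (hf.differentiable one_ne_zero)).1 heq
end

section
/- Let j ∈ ℕ and define the entire function f(z) = exp(−z²/4)·F_j(z), where F_j is the probabilists' Hermite polynomial. Then for every z ∈ ℂ, −f''(z) + (z²/4)·f(z) = (j + 1/2)·f(z), where f'' denotes the second complex derivative of f. -/
/-!
Conjugating the harmonic oscillator `-d²/dz² + z²/4` by the Gaussian `exp (-z²/4)` turns it into
the Hermite operator `-d²/dz² + z d/dz + 1/2`. The Appell property `F_{n+1}' = (n + 1) F_n`,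
combined with the recurrence `F_{n+1} = X F_n - F_n'`, says that `F_n` is an eigenfunction of the
latter with eigenvalue `n + 1/2`.
-/

open Topology

section Hermite

open Polynomial

theorem derivative_hermite_succ (n : ℕ) :
    derivative (hermite (n + 1)) = ((n : ℤ[X]) + 1) * hermite n := by
  induction n with
  | zero => simp
  | succ n ih =>
    have derivative_rhs : derivative (((n : ℤ[X]) + 1) * hermite n) =
        ((n : ℤ[X]) + 1) * derivative (hermite n) := by
      simp [derivative_mul]
    calc derivative (hermite (n + 2))
        = hermite (n + 1) + X * derivative (hermite (n + 1)) -
            derivative (derivative (hermite (n + 1))) := by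
          rw [hermite_succ (n + 1), derivative_sub, derivative_mul, derivative_X, one_mul]
      _ = hermite (n + 1) + ((n : ℤ[X]) + 1) * (X * hermite n - derivative (hermite n)) := by
          rw [ih, derivative_rhs]
          ring
      _ = (((n + 1 : ℕ) : ℤ[X]) + 1) * hermite (n + 1) := by
          rw [← hermite_succ]
          push_cast
          ring

theorem derivative_derivative_hermite (n : ℕ) :
    derivative (derivative (hermite n)) =
      X * derivative (hermite n) - (n : ℤ[X]) * hermite n := by
  have derivative_eq : derivative (hermite n) = X * hermite n - hermite (n + 1) := by
    rw [hermite_succ, sub_sub_cancel]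
  calc derivative (derivative (hermite n))
      = hermite n + X * derivative (hermite n) - derivative (hermite (n + 1)) := by
        rw [congrArg derivative derivative_eq, derivative_sub, derivative_mul, derivative_X,
          one_mul]
    _ = X * derivative (hermite n) - (n : ℤ[X]) * hermite n := by
        rw [derivative_hermite_succ]
        ring

end Hermite

section GaussianConjugation

variable {φ g : ℂ → ℂ} {z : ℂ}

theorem deriv_cexp_mul (hφ : DifferentiableAt ℂ φ z) (hg : DifferentiableAt ℂ g z) :
    deriv (fun w ↦ Complex.exp (φ w) * g w) z =
      Complex.exp (φ z) * (deriv g z + deriv φ z * g z) := by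
  rw [deriv_fun_mul hφ.cexp hg, deriv_cexp hφ]
  ring

theorem deriv_deriv_cexp_mul (hφ : AnalyticAt ℂ φ z) (hg : AnalyticAt ℂ g z) :
    deriv (deriv fun w ↦ Complex.exp (φ w) * g w) z =
      Complex.exp (φ z) * (deriv (deriv g) z + 2 * deriv φ z * deriv g z +
        (deriv (deriv φ) z + deriv φ z ^ 2) * g z) := by
  have first_deriv : deriv (fun w ↦ Complex.exp (φ w) * g w) =ᶠ[𝓝 z]
      fun w ↦ Complex.exp (φ w) * (deriv g w + deriv φ w * g w) := by
    filter_upwards [hφ.eventually_analyticAt, hg.eventually_analyticAt] with w hφw hgw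
    exact deriv_cexp_mul hφw.differentiableAt hgw.differentiableAt
  have hφ' : DifferentiableAt ℂ (deriv φ) z := hφ.deriv.differentiableAt
  have hg' : DifferentiableAt ℂ (deriv g) z := hg.deriv.differentiableAt
  have hφ'g : DifferentiableAt ℂ (fun w ↦ deriv φ w * g w) z := hφ'.mul hg.differentiableAt
  rw [first_deriv.deriv_eq, deriv_cexp_mul hφ.differentiableAt (hg'.fun_add hφ'g),
    deriv_fun_add hg' hφ'g, deriv_fun_mul hφ' hg.differentiableAt]
  ring

theorem deriv_neg_sq_div_four : deriv (fun w : ℂ ↦ -w ^ 2 / 4) = fun w ↦ -w / 2 := by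
  funext w
  simp only [deriv_div_const, deriv.fun_neg, deriv_pow_field]
  ring

theorem neg_deriv_deriv_add_sq_mul_gaussian_mul (hg : AnalyticAt ℂ g z) :
    -deriv (deriv fun w ↦ Complex.exp (-w ^ 2 / 4) * g w) z +
        z ^ 2 / 4 * (Complex.exp (-z ^ 2 / 4) * g z) =
      Complex.exp (-z ^ 2 / 4) * (-deriv (deriv g) z + z * deriv g z + g z / 2) := by
  have gaussian_exponent_analytic : AnalyticAt ℂ (fun w : ℂ ↦ -w ^ 2 / 4) z := by fun_prop
  have deriv_neg_half : deriv (fun w : ℂ ↦ -w / 2) z = -1 / 2 := by simp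
  rw [deriv_deriv_cexp_mul gaussian_exponent_analytic hg, deriv_neg_sq_div_four, deriv_neg_half]
  ring

end GaussianConjugation

section HermiteOperator

open Polynomial

theorem deriv_deriv_aeval_hermite (n : ℕ) (z : ℂ) :
    deriv (deriv fun w : ℂ ↦ aeval w (hermite n)) z =
      z * deriv (fun w : ℂ ↦ aeval w (hermite n)) z - n * aeval z (hermite n) := by
  have deriv_aeval_fun (p : ℤ[X]) :
      deriv (fun w : ℂ ↦ aeval w p) = fun w ↦ aeval w (derivative p) :=
    funext fun _ ↦ p.deriv_aeval
  simp only [deriv_aeval_fun, derivative_derivative_hermite, map_sub, map_mul, aeval_X,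
    map_natCast]

end HermiteOperator

/-- The entire Hermite function `f(z) = exp(−z²/4)·F_j(z)` (with `F_j` the probabilists'
Hermite polynomial) satisfies `−f'' + (z²/4)f = (j + 1/2)f` on all of `ℂ`. -/
theorem stmt_7 (j : ℕ) (f : ℂ → ℂ)
    (hf : ∀ z : ℂ, f z = Complex.exp (-z ^ 2 / 4) * Polynomial.aeval z (Polynomial.hermite j)) :
    ∀ z : ℂ, -(deriv (deriv f) z) + (z ^ 2 / 4) * f z = ((j : ℂ) + 1/2) * f z := by
  intro z
  obtain rfl : f = _ := funext hf
  have hermite_analytic : AnalyticAt ℂ (fun w : ℂ ↦ Polynomial.aeval w (Polynomial.hermite j)) z :=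
    analyticAt_id.aeval_polynomial _
  rw [neg_deriv_deriv_add_sq_mul_gaussian_mul hermite_analytic, deriv_deriv_aeval_hermite]
  ring
end

section
/- Let n ≥ 1 and let V : ℝⁿ → ℝ be continuously differentiable, bounded, and such that |∇V(x)| ≤ C(1 + |x|)^m for some constants C > 0 and m ∈ ℕ. If u : ℝⁿ × ℝⁿ → ℂ is a Schwartz function satisfying, for all (x,v) ∈ ℝⁿ × ℝⁿ, −Δ_v u(x,v) + (|v|²/4 − n/2)·u(x,v) + v·∇_x u(x,v) − ∇V(x)·∇_v u(x,v) = 0, then u = 0. That is, the Kramers–Fokker–Planck operator with a bounded potential has no nonzero stationary Schwartz solutions. -/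
/-!
Pair the equation `P u = 0` with `u` in `L²`. The part `-Δ_v + |v|²/4 - n/2` equals `∑ⱼ aⱼ* aⱼ` with
`aⱼ = ∂_{vⱼ} + vⱼ/2`, while the transport terms `v·∇_x` and `∇V·∇_v` are antisymmetric and
contribute nothing, so `∑ⱼ ‖aⱼ u‖² = 0`. Hence `aⱼ u = 0` for all `j`, and the equation reduces to
`v·∇_x u = -(v·∇V) u / 2`. These two facts say that `w = exp(H/2) u`, with `H = |v|²/2 + V(x)`,
satisfies `∇_v w = 0` and `v·∇_x w = 0`, which forces `w` to be a constant `c`. The restriction of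
`u = exp(-H/2) c` to `v = 0` tends to zero at infinity, so `c = 0` unless `V → ∞` at infinity.
-/

open MeasureTheory SchwartzMap LineDeriv Filter
open scoped InnerProductSpace

section SchwartzSpace

variable {D F : Type*} [NormedAddCommGroup D] [NormedSpace ℝ D]

section NormedSpace

variable [NormedAddCommGroup F] [NormedSpace ℝ F]

lemma smulLeftCLM_clm_apply (ℓ : D →L[ℝ] ℝ) (u : 𝓢(D, F)) (x : D) :
    smulLeftCLM F ℓ u x = ℓ x • u x :=
  smulLeftCLM_apply_apply ℓ.hasTemperateGrowth u x

lemma lineDerivOp_smulLeftCLM_clm_apply (ℓ : D →L[ℝ] ℝ) (e : D) (u : 𝓢(D, F)) (x : D) :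
    ∂_{e} (smulLeftCLM F ℓ u) x = ℓ e • u x + ℓ x • ∂_{e} u x := by
  have hderiv : HasFDerivAt (smulLeftCLM F ℓ u) (ℓ x • fderiv ℝ u x + ℓ.smulRight (u x)) x :=
    (ℓ.hasFDerivAt.smul u.differentiableAt.hasFDerivAt).congr_of_eventuallyEq
      (.of_forall (smulLeftCLM_clm_apply ℓ u))
  rw [lineDerivOp_apply_eq_fderiv, hderiv.fderiv, lineDerivOp_apply_eq_fderiv, add_comm]
  rfl

/-- The annihilation operator `∂ₑ + ℓ/2` of the harmonic oscillator in the direction `e`, where the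
linear functional `ℓ` is the coordinate along `e`. -/
noncomputable def annihilation (ℓ : D →L[ℝ] ℝ) (e : D) (u : 𝓢(D, F)) : 𝓢(D, F) :=
  ∂_{e} u + (2⁻¹ : ℝ) • smulLeftCLM F ℓ u

/-- The creation operator `-∂ₑ + ℓ/2`, the formal `L²`-adjoint of `annihilation ℓ e`. -/
noncomputable def creation (ℓ : D →L[ℝ] ℝ) (e : D) (u : 𝓢(D, F)) : 𝓢(D, F) :=
  -∂_{e} u + (2⁻¹ : ℝ) • smulLeftCLM F ℓ u

lemma annihilation_apply (ℓ : D →L[ℝ] ℝ) (e : D) (u : 𝓢(D, F)) (x : D) :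
    annihilation ℓ e u x = ∂_{e} u x + (ℓ x / 2) • u x := by
  simp only [annihilation, add_apply, smul_apply, smulLeftCLM_clm_apply]
  module

lemma creation_zero (ℓ : D →L[ℝ] ℝ) (e : D) : creation ℓ e (0 : 𝓢(D, F)) = 0 := by
  simp [creation]

lemma creation_annihilation_apply {ℓ : D →L[ℝ] ℝ} {e : D} (hℓe : ℓ e = 1) (u : 𝓢(D, F)) (x : D) :
    creation ℓ e (annihilation ℓ e u) x = -∂_{e} (∂_{e} u) x + (ℓ x ^ 2 / 4 - 1 / 2) • u x := by
  simp only [creation, annihilation, lineDerivOp_add, lineDerivOp_smul, map_add, map_smul,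
    add_apply, neg_apply, smul_apply, smulLeftCLM_clm_apply, lineDerivOp_smulLeftCLM_clm_apply, hℓe]
  module

end NormedSpace

variable [NormedAddCommGroup F] [InnerProductSpace ℝ F] [MeasurableSpace D] [BorelSpace D]
  {μ : Measure D}

lemma integrable_inner_schwartzMap [SecondCountableTopology D] [μ.HasTemperateGrowth]
    (u w : 𝓢(D, F)) : Integrable (fun x ↦ ⟪u x, w x⟫_ℝ) μ :=
  (pairing (innerSL ℝ) u w).integrable

lemma eq_zero_of_integral_inner_self_eq_zero [SecondCountableTopology D] [μ.HasTemperateGrowth]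
    [μ.IsOpenPosMeasure] {u : 𝓢(D, F)} (hu : ∫ x, ⟪u x, u x⟫_ℝ ∂μ = 0) : u = 0 := by
  have hae : (fun x ↦ ⟪u x, u x⟫_ℝ) =ᵐ[μ] fun _ ↦ 0 :=
    (integral_eq_zero_iff_of_nonneg (fun x ↦ real_inner_self_nonneg)
      (integrable_inner_schwartzMap u u)).1 hu
  have hzero := (Continuous.ae_eq_iff_eq μ (u.continuous.inner u.continuous) continuous_const).1 hae
  ext x
  exact inner_self_eq_zero.1 (congrFun hzero x)

variable [FiniteDimensional ℝ D] [μ.IsAddHaarMeasure]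

lemma integral_inner_lineDerivOp_right (e : D) (u w : 𝓢(D, F)) :
    ∫ x, ⟪u x, ∂_{e} w x⟫_ℝ ∂μ = -∫ x, ⟪∂_{e} u x, w x⟫_ℝ ∂μ :=
  integral_bilinear_lineDerivOp_right_eq_neg_left u w (innerSL ℝ) e

lemma integral_inner_creation_right (ℓ : D →L[ℝ] ℝ) (e : D) (u w : 𝓢(D, F)) :
    ∫ x, ⟪u x, creation ℓ e w x⟫_ℝ ∂μ = ∫ x, ⟪annihilation ℓ e u x, w x⟫_ℝ ∂μ := by
  have hpotential (x : D) : ⟪u x, ((2⁻¹ : ℝ) • smulLeftCLM F ℓ w) x⟫_ℝ =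
      ⟪((2⁻¹ : ℝ) • smulLeftCLM F ℓ u) x, w x⟫_ℝ := by
    simp only [smul_apply, smulLeftCLM_clm_apply, real_inner_smul_left, real_inner_smul_right]
  simp only [creation, annihilation, add_apply, inner_add_right, inner_add_left, hpotential,
    neg_apply, inner_neg_right]
  rw [integral_add (integrable_inner_schwartzMap _ _).fun_neg (integrable_inner_schwartzMap _ _),
    integral_add (integrable_inner_schwartzMap _ _) (integrable_inner_schwartzMap _ _),
    integral_neg, integral_inner_lineDerivOp_right, neg_neg]

lemma integral_inner_lineDerivOp_self (e : D) (u : 𝓢(D, F)) :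
    ∫ x, ⟪u x, ∂_{e} u x⟫_ℝ ∂μ = 0 := by
  have hparts := integral_inner_lineDerivOp_right (μ := μ) e u u
  simp only [real_inner_comm (u _)] at hparts
  linarith

lemma integral_inner_smulLeftCLM_lineDerivOp_self {ℓ : D →L[ℝ] ℝ} {e : D} (hℓe : ℓ e = 0)
    (u : 𝓢(D, F)) : ∫ x, ⟪u x, smulLeftCLM F ℓ (∂_{e} u) x⟫_ℝ ∂μ = 0 := by
  have hparts := integral_inner_lineDerivOp_right (μ := μ) e (smulLeftCLM F ℓ u) u
  simp only [lineDerivOp_smulLeftCLM_clm_apply, hℓe, zero_smul, zero_add, smulLeftCLM_clm_apply,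
    real_inner_smul_left, real_inner_comm (u _) (∂_{e} u _)] at hparts
  simp only [smulLeftCLM_clm_apply, real_inner_smul_right]
  linarith

end SchwartzSpace

section Slices

variable {E₁ E₂ F : Type*} [NormedAddCommGroup E₁] [NormedSpace ℝ E₁] [NormedAddCommGroup E₂]
  [NormedSpace ℝ E₂]

lemma hasTemperateGrowth_prodMk (x : E₁) :
    (Prod.mk x : E₂ → E₁ × E₂).HasTemperateGrowth := by
  have haffine : (Prod.mk x : E₂ → E₁ × E₂) =
      fun v ↦ (x, 0) + ContinuousLinearMap.inr ℝ E₁ E₂ v := by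
    ext v <;> simp
  rw [haffine]
  fun_prop

/-- The restriction `u (x, ·)` of a Schwartz function on a product to a fibre of the first
projection, as a Schwartz function. -/
noncomputable def sliceSnd [NormedAddCommGroup F] [NormedSpace ℝ F] (u : 𝓢(E₁ × E₂, F)) (x : E₁) :
    𝓢(E₂, F) :=
  compCLMOfAntilipschitz (g := Prod.mk x) (K := 1) ℝ (hasTemperateGrowth_prodMk x)
    (LipschitzWith.prod_snd.to_rightInverse fun _ ↦ rfl) u

lemma lineDerivOp_sliceSnd_apply [NormedAddCommGroup F] [NormedSpace ℝ F] (u : 𝓢(E₁ × E₂, F))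
    (x : E₁) (b v : E₂) : ∂_{b} (sliceSnd u x) v = fderiv ℝ u (x, v) (0, b) := by
  have hderiv : HasFDerivAt (sliceSnd u x)
      (fderiv ℝ u (x, v) ∘L .inr ℝ E₁ E₂) v :=
    u.differentiableAt.hasFDerivAt.comp v (hasFDerivAt_prodMk_right x v)
  rw [lineDerivOp_apply_eq_fderiv, hderiv.fderiv]
  rfl

variable [NormedAddCommGroup F] [InnerProductSpace ℝ F]
  [FiniteDimensional ℝ E₁] [MeasurableSpace E₁] [BorelSpace E₁]
  [FiniteDimensional ℝ E₂] [MeasurableSpace E₂] [BorelSpace E₂]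

lemma integral_inner_eq_zero_of_eq_fderiv_snd (μ : Measure E₁) [μ.IsAddHaarMeasure]
    (ν : Measure E₂) [ν.IsAddHaarMeasure] {u w : 𝓢(E₁ × E₂, F)} (b : E₁ → E₂)
    (hw : ∀ p, w p = fderiv ℝ u p (0, b p.1)) :
    ∫ p, ⟪u p, w p⟫_ℝ ∂(μ.prod ν) = 0 := by
  rw [integral_prod _ (integrable_inner_schwartzMap u w)]
  refine integral_eq_zero_of_ae (.of_forall fun x ↦ ?_)
  simp only [hw, ← lineDerivOp_sliceSnd_apply]
  exact integral_inner_lineDerivOp_self (b x) (sliceSnd u x)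

end Slices

section Transport

variable {E F : Type*} [NormedAddCommGroup E] [NormedSpace ℝ E] [NormedAddCommGroup F]
  [NormedSpace ℝ F]

-- Independence of `v` lets `v` be chosen equal to the direction in which `x` is differentiated.
lemma eq_of_fderiv_snd_eq_zero_of_fderiv_transport_eq_zero {w : E × E → F}
    (hw : Differentiable ℝ w) (hsnd : ∀ p b, fderiv ℝ w p (0, b) = 0)
    (htransport : ∀ p, fderiv ℝ w p (p.2, 0) = 0) (p q : E × E) : w p = w q := by
  have hslice_snd (x v : E) : HasFDerivAt (fun v ↦ w (x, v)) (fderiv ℝ w (x, v) ∘L .inr ℝ E E) v :=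
    (hw (x, v)).hasFDerivAt.comp v (hasFDerivAt_prodMk_right x v)
  have hslice_fst (x v : E) : HasFDerivAt (fun x ↦ w (x, v)) (fderiv ℝ w (x, v) ∘L .inl ℝ E E) x :=
    (hw (x, v)).hasFDerivAt.comp x (hasFDerivAt_prodMk_left x v)
  have hindep (x v v' : E) : w (x, v) = w (x, v') :=
    is_const_of_fderiv_eq_zero (fun v ↦ (hslice_snd x v).differentiableAt)
      (fun v ↦ by rw [(hslice_snd x v).fderiv]; ext b; exact hsnd (x, v) b) v v'
  have hfst (x v a : E) : fderiv ℝ w (x, v) (a, 0) = 0 := by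
    have hderiv_eq := (hslice_fst x v).unique
      ((hslice_fst x a).congr_of_eventuallyEq (.of_forall fun x ↦ hindep x v a))
    exact (DFunLike.congr_fun hderiv_eq a).trans (htransport (x, a))
  refine is_const_of_fderiv_eq_zero hw (fun p ↦ ?_) p q
  ext b
  · exact hfst p.1 p.2 b
  · exact hsnd p b

end Transport

section KramersFokkerPlanck

/-- Phase space `ℝⁿ × ℝⁿ`, with points `(x, v)` consisting of a position and a velocity. -/
abbrev PhaseSpace (ι : Type*) : Type _ := (ι → ℝ) × (ι → ℝ)

variable {ι F : Type*} [Fintype ι]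

section NormedSpace

variable [DecidableEq ι] [NormedAddCommGroup F] [NormedSpace ℝ F]

lemma clm_pi_apply_eq_sum_single (L : (ι → ℝ) →L[ℝ] F) (a : ι → ℝ) :
    L a = ∑ j, a j • L (Pi.single j 1) := by
  conv_lhs => rw [pi_eq_sum_univ' a]
  simp only [map_sum, map_smul]

lemma fderiv_fst_eq_sum (u : 𝓢(PhaseSpace ι, F)) (p : PhaseSpace ι) (a : ι → ℝ) :
    fderiv ℝ u p (a, 0) = ∑ j, a j • ∂_{((Pi.single j 1, 0) : PhaseSpace ι)} u p :=
  clm_pi_apply_eq_sum_single (fderiv ℝ u p ∘L .inl ℝ _ _) a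

lemma fderiv_snd_eq_sum (u : 𝓢(PhaseSpace ι, F)) (p : PhaseSpace ι) (b : ι → ℝ) :
    fderiv ℝ u p (0, b) = ∑ j, b j • ∂_{((0, Pi.single j 1) : PhaseSpace ι)} u p :=
  clm_pi_apply_eq_sum_single (fderiv ℝ u p ∘L .inr ℝ _ _) b

/-- The Kramers–Fokker–Planck operator `-Δ_v + (|v|²/4 - n/2) + v·∇_x - ∇V(x)·∇_v`, acting on
Schwartz functions of `(x, v)`. -/
noncomputable def kfpOperator (V : (ι → ℝ) → ℝ) (u : 𝓢(PhaseSpace ι, F))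
    (p : PhaseSpace ι) : F :=
  -∑ j, ∂_{((0, Pi.single j 1) : PhaseSpace ι)}
      (∂_{((0, Pi.single j 1) : PhaseSpace ι)} u) p
    + ((∑ j, p.2 j ^ 2) / 4 - (Fintype.card ι : ℝ) / 2) • u p
    + ∑ j, p.2 j • ∂_{((Pi.single j 1, 0) : PhaseSpace ι)} u p
    - ∑ j, fderiv ℝ V p.1 (Pi.single j 1) • ∂_{((0, Pi.single j 1) : PhaseSpace ι)} u p

/-- The velocity coordinate `(x, v) ↦ v j` on phase space. -/
noncomputable def velocityCoord (j : ι) : PhaseSpace ι →L[ℝ] ℝ :=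
  .proj j ∘L .snd ℝ (ι → ℝ) (ι → ℝ)

/-- The annihilation operator `∂_{v_j} + v_j/2`; the common kernel over all `j` consists of the
functions that are Maxwellian in the velocity. -/
noncomputable def velocityAnnihilation (j : ι) (u : 𝓢(PhaseSpace ι, F)) :
    𝓢(PhaseSpace ι, F) :=
  annihilation (velocityCoord j) (0, Pi.single j 1) u

/-- The symmetric part `-Δ_v + |v|²/4 - n/2` of the Kramers–Fokker–Planck operator, written as a sum
of harmonic oscillators `a_j* a_j`. -/
noncomputable def velocityOscillator (u : 𝓢(PhaseSpace ι, F)) : 𝓢(PhaseSpace ι, F) :=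
  ∑ j, creation (velocityCoord j) (0, Pi.single j 1) (velocityAnnihilation j u)

/-- The free transport operator `v·∇_x`. -/
noncomputable def freeTransport (u : 𝓢(PhaseSpace ι, F)) : 𝓢(PhaseSpace ι, F) :=
  ∑ j, smulLeftCLM F (velocityCoord j) (∂_{((Pi.single j 1, 0) : PhaseSpace ι)} u)

lemma velocityOscillator_apply (u : 𝓢(PhaseSpace ι, F)) (p : PhaseSpace ι) :
    velocityOscillator u p =
      -∑ j, ∂_{((0, Pi.single j 1) : PhaseSpace ι)}
          (∂_{((0, Pi.single j 1) : PhaseSpace ι)} u) p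
        + ((∑ j, p.2 j ^ 2) / 4 - (Fintype.card ι : ℝ) / 2) • u p := by
  have hcoord (j : ι) : velocityCoord j ((0, Pi.single j 1) : PhaseSpace ι) = 1 := by
    simp [velocityCoord]
  have hscalar : (∑ j, p.2 j ^ 2) / 4 - (Fintype.card ι : ℝ) / 2 =
      ∑ j, (p.2 j ^ 2 / 4 - 1 / 2) := by
    simp [Finset.sum_sub_distrib, ← Finset.sum_div, div_eq_mul_inv (Fintype.card ι : ℝ)]
  simp only [velocityOscillator, velocityAnnihilation, sum_apply,
    creation_annihilation_apply (hcoord _), Finset.sum_add_distrib, Finset.sum_neg_distrib, hscalar,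
    Finset.sum_smul]
  rfl

lemma freeTransport_apply (u : 𝓢(PhaseSpace ι, F)) (p : PhaseSpace ι) :
    freeTransport u p = fderiv ℝ u p (p.2, 0) := by
  simp only [freeTransport, sum_apply, smulLeftCLM_clm_apply, fderiv_fst_eq_sum]
  rfl

lemma kfpOperator_eq (V : (ι → ℝ) → ℝ) (u : 𝓢(PhaseSpace ι, F)) (p : PhaseSpace ι) :
    kfpOperator V u p = velocityOscillator u p + freeTransport u p
      - fderiv ℝ u p (0, fun j ↦ fderiv ℝ V p.1 (Pi.single j 1)) := by
  rw [kfpOperator, velocityOscillator_apply, freeTransport_apply, fderiv_fst_eq_sum,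
    fderiv_snd_eq_sum]

lemma fderiv_snd_eq_of_velocityAnnihilation_eq_zero {u : 𝓢(PhaseSpace ι, F)}
    (hu : ∀ j, velocityAnnihilation j u = 0) (p : PhaseSpace ι) (b : ι → ℝ) :
    fderiv ℝ u p (0, b) = -((∑ j, p.2 j * b j) / 2) • u p := by
  have hpartial (j : ι) : ∂_{((0, Pi.single j 1) : PhaseSpace ι)} u p = -(p.2 j / 2) • u p := by
    have happly := DFunLike.congr_fun (hu j) p
    rw [velocityAnnihilation, annihilation_apply] at happly
    rw [neg_smul]
    exact eq_neg_of_add_eq_zero_left happly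
  simp only [fderiv_snd_eq_sum, hpartial, smul_smul, ← Finset.sum_smul, Finset.sum_div,
    ← Finset.sum_neg_distrib]
  congr! 2
  ring

end NormedSpace

/-- The energy `|v|²/2 + V(x)`. -/
noncomputable def hamiltonian (V : (ι → ℝ) → ℝ) (p : PhaseSpace ι) : ℝ :=
  (∑ j, p.2 j ^ 2) / 2 + V p.1

lemma differentiable_hamiltonian {V : (ι → ℝ) → ℝ} (hV : Differentiable ℝ V) :
    Differentiable ℝ (hamiltonian V) := by
  unfold hamiltonian
  fun_prop

lemma fderiv_hamiltonian_apply {V : (ι → ℝ) → ℝ} (hV : Differentiable ℝ V)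
    (p d : PhaseSpace ι) :
    fderiv ℝ (hamiltonian V) p d = ∑ j, p.2 j * d.2 j + fderiv ℝ V p.1 d.1 := by
  have hcoord (j : ι) : HasFDerivAt (fun p : PhaseSpace ι ↦ p.2 j) (velocityCoord j) p :=
    (velocityCoord j).hasFDerivAt
  have hderiv : HasFDerivAt (hamiltonian V) _ p :=
    ((HasFDerivAt.fun_sum fun j _ ↦ (hcoord j).pow 2).mul_const (2⁻¹ : ℝ)).add
      ((hV p.1).hasFDerivAt.comp p hasFDerivAt_fst)
  rw [hderiv.fderiv]
  simp [velocityCoord, Finset.mul_sum, mul_assoc]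

section StationaryStates

instance : (volume : Measure (PhaseSpace ι)).IsAddHaarMeasure :=
  Measure.prod.instIsAddHaarMeasure (volume : Measure (ι → ℝ)) volume

variable [DecidableEq ι] [NormedAddCommGroup F] [InnerProductSpace ℝ F]

lemma integral_inner_velocityOscillator (u : 𝓢(PhaseSpace ι, F)) :
    ∫ p, ⟪u p, velocityOscillator u p⟫_ℝ =
      ∑ j, ∫ p, ⟪velocityAnnihilation j u p, velocityAnnihilation j u p⟫_ℝ := by
  simp only [velocityOscillator, sum_apply, inner_sum]
  rw [integral_finsetSum _ fun j _ ↦ integrable_inner_schwartzMap _ _]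
  exact Finset.sum_congr rfl fun j _ ↦ integral_inner_creation_right _ _ _ _

lemma integral_inner_freeTransport (u : 𝓢(PhaseSpace ι, F)) :
    ∫ p, ⟪u p, freeTransport u p⟫_ℝ = 0 := by
  simp only [freeTransport, sum_apply, inner_sum]
  rw [integral_finsetSum _ fun j _ ↦ integrable_inner_schwartzMap _ _]
  exact Finset.sum_eq_zero fun j _ ↦
    integral_inner_smulLeftCLM_lineDerivOp_self (by simp [velocityCoord]) u

variable {V : (ι → ℝ) → ℝ} {u : 𝓢(PhaseSpace ι, F)}

-- The equation exhibits the force term as a Schwartz function, so Fubini applies to it whatever the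
-- growth of `∇V`.
lemma velocityAnnihilation_eq_zero_of_kfpOperator_eq_zero (hu : ∀ p, kfpOperator V u p = 0)
    (j : ι) : velocityAnnihilation j u = 0 := by
  have hforce : ∫ p, ⟪u p, (velocityOscillator u + freeTransport u) p⟫_ℝ = 0 :=
    integral_inner_eq_zero_of_eq_fderiv_snd volume volume
      (fun x j ↦ fderiv ℝ V x (Pi.single j 1)) fun p ↦ by
        rw [add_apply, ← sub_eq_zero, ← kfpOperator_eq, hu]
  have hdissipation :
      ∑ j, ∫ p, ⟪velocityAnnihilation j u p, velocityAnnihilation j u p⟫_ℝ = 0 := by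
    simp only [add_apply, inner_add_right] at hforce
    rwa [integral_add (integrable_inner_schwartzMap _ _) (integrable_inner_schwartzMap _ _),
      integral_inner_freeTransport, add_zero, integral_inner_velocityOscillator] at hforce
  exact eq_zero_of_integral_inner_self_eq_zero <|
    (Finset.sum_eq_zero_iff_of_nonneg fun _ _ ↦ integral_nonneg fun _ ↦ real_inner_self_nonneg).1
      hdissipation j (Finset.mem_univ j)

lemma fderiv_transport_eq_of_kfpOperator_eq_zero (hu : ∀ p, kfpOperator V u p = 0)
    (p : PhaseSpace ι) :
    fderiv ℝ u p (p.2, 0) = -(fderiv ℝ V p.1 p.2 / 2) • u p := by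
  have hann := velocityAnnihilation_eq_zero_of_kfpOperator_eq_zero hu
  have hosc : velocityOscillator u = 0 := by
    simp only [velocityOscillator, hann, creation_zero, Finset.sum_const_zero]
  have hbalance := hu p
  rw [kfpOperator_eq, hosc, zero_apply, zero_add, freeTransport_apply, sub_eq_zero] at hbalance
  rw [hbalance, fderiv_snd_eq_of_velocityAnnihilation_eq_zero hann,
    clm_pi_apply_eq_sum_single (fderiv ℝ V p.1)]
  rfl

theorem exists_eq_exp_neg_hamiltonian_smul_of_kfpOperator_eq_zero (hV : Differentiable ℝ V)
    (hu : ∀ p, kfpOperator V u p = 0) :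
    ∃ c : F, ∀ p, u p = Real.exp (-(hamiltonian V p / 2)) • c := by
  let w (p : PhaseSpace ι) : F := Real.exp (hamiltonian V p / 2) • u p
  have hw (p : PhaseSpace ι) : HasFDerivAt w _ p :=
    ((differentiable_hamiltonian hV p).hasFDerivAt.mul_const (2⁻¹ : ℝ)).exp.smul
      u.differentiableAt.hasFDerivAt
  have hw_apply (p d : PhaseSpace ι) : fderiv ℝ w p d = Real.exp (hamiltonian V p / 2) •
      (fderiv ℝ u p d + ((∑ j, p.2 j * d.2 j + fderiv ℝ V p.1 d.1) / 2) • u p) := by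
    rw [(hw p).fderiv, ← fderiv_hamiltonian_apply hV]
    simp only [add_apply, smul_apply, ContinuousLinearMap.smulRight_apply, smul_eq_mul,
      div_eq_mul_inv, smul_add, add_right_inj]
    module
  have hconst (p : PhaseSpace ι) : w p = w 0 := by
    refine eq_of_fderiv_snd_eq_zero_of_fderiv_transport_eq_zero
      (fun p ↦ (hw p).differentiableAt) (fun p b ↦ ?_) (fun p ↦ ?_) p 0
    · rw [hw_apply, fderiv_snd_eq_of_velocityAnnihilation_eq_zero
        (velocityAnnihilation_eq_zero_of_kfpOperator_eq_zero hu)]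
      simp
    · rw [hw_apply, fderiv_transport_eq_of_kfpOperator_eq_zero hu]
      simp
  refine ⟨w 0, fun p ↦ ?_⟩
  rw [← hconst p, smul_smul, ← Real.exp_add, neg_add_cancel, Real.exp_zero, one_smul]

theorem stmt_16_general {V : (ι → ℝ) → ℝ} {u : 𝓢(PhaseSpace ι, F)}
    (hV : Differentiable ℝ V) (hV_infty : ¬Tendsto V (cocompact (ι → ℝ)) atTop)
    (hu : ∀ p, kfpOperator V u p = 0) : u = 0 := by
  obtain ⟨c, hc⟩ := exists_eq_exp_neg_hamiltonian_smul_of_kfpOperator_eq_zero hV hu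
  suffices hc0 : c = 0 by
    ext p
    simp [hc, hc0]
  contrapose! hV_infty with hc0
  have hslice : Tendsto (fun x : ι → ℝ ↦ (x, (0 : ι → ℝ)))
      (cocompact (ι → ℝ)) (cocompact (PhaseSpace ι)) :=
    (Function.LeftInverse.isClosedEmbedding (f := Prod.fst) (fun _ ↦ rfl) continuous_fst
      (by fun_prop)).tendsto_cocompact
  have hdecay : Tendsto (fun x ↦ ‖u (x, 0)‖ / ‖c‖) (cocompact (ι → ℝ)) (nhds 0) := by
    simpa using ((u.tendsto_cocompact.comp hslice).norm).div_const ‖c‖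
  have hratio (x : ι → ℝ) : ‖u (x, 0)‖ / ‖c‖ = Real.exp (-(V x / 2)) := by
    simp [hc, hamiltonian, norm_smul, hc0]
  simp only [hratio, Real.tendsto_exp_comp_nhds_zero, tendsto_neg_atBot_iff] at hdecay
  simpa using hdecay.atTop_mul_const two_pos

end StationaryStates

end KramersFokkerPlanck

/-- The Kramers–Fokker–Planck operator with a bounded `C¹` potential whose gradient has
polynomial growth has no nonzero stationary Schwartz solutions: if `u` is a Schwartz
function on `ℝⁿ × ℝⁿ` with
`−Δ_v u + (|v|²/4 − n/2)u + v·∇_x u − ∇V(x)·∇_v u = 0`, then `u = 0`. -/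
theorem stmt_16 (n : ℕ) (hn : 1 ≤ n) (V : (Fin n → ℝ) → ℝ) (hV : ContDiff ℝ 1 V)
    (hVb : ∃ C : ℝ, ∀ x, |V x| ≤ C)
    (hVgrad : ∃ C > (0 : ℝ), ∃ m : ℕ, ∀ x, ‖fderiv ℝ V x‖ ≤ C * (1 + ‖x‖) ^ m)
    (u : SchwartzMap ((Fin n → ℝ) × (Fin n → ℝ)) ℂ)
    (hu : ∀ p : (Fin n → ℝ) × (Fin n → ℝ),
      -(∑ j, fderiv ℝ (fun q => fderiv ℝ (⇑u) q (0, Pi.single j 1)) p (0, Pi.single j 1))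
        + (((∑ j, (p.2 j) ^ 2 : ℝ) : ℂ) / 4 - (n : ℂ) / 2) * u p
        + (∑ j, ((p.2 j : ℝ) : ℂ) * fderiv ℝ (⇑u) p (Pi.single j 1, 0))
        - (∑ j, ((fderiv ℝ V p.1 (Pi.single j 1) : ℝ) : ℂ) *
            fderiv ℝ (⇑u) p (0, Pi.single j 1)) = 0) :
    u = 0 := by
  obtain ⟨C, hC⟩ := hVb
  have : Nonempty (Fin n) := ⟨⟨0, hn⟩⟩
  have hV_bdd : BddAbove (Set.range V) := ⟨C, Set.forall_mem_range.2 fun x ↦ le_of_abs_le (hC x)⟩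
  exact stmt_16_general (hV.differentiable one_ne_zero)
    (fun hV_infty ↦ not_bddAbove_of_tendsto_atTop hV_infty hV_bdd)
    fun p ↦ by simpa [kfpOperator] using! hu p
end
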